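/- Fix h > 0 and d ≥ 1. Let F̈ : ℝ^{2d} → ℝ be a C^∞ function which, together with all its partial derivatives, is at most polynomially increasing. Let α, β ∈ ℕ^d with α ≠ β, and define I_{α,β}(F̈) = ∫_{ℝ^{2d}} F̈(x,ξ)·Π_{l=1}^d W_{h,ℝ}(ψ_{α_l},ψ_{β_l})(x_l,ξ_l) dμ_{ℝ^{2d},h/2}(x,ξ). Then for every index j ≤ d with α_j ≠ β_j and every differentiation order n ∈ ℕ*: I_{α,β}(F̈) = (i^n/(β_j − α_j)^n)·∫_{ℝ^{2d}} ((x_j∂_{ξ_j} − ξ_j∂_{x_j})^n F̈)(x,ξ)·Π_{l=1}^d W_{h,ℝ}(ψ_{α_l},ψ_{β_l})(x_l,ξ_l) dμ_{ℝ^{2d},h/2}(x,ξ). In particular, if (x_j∂_{ξ_j} − ξ_j∂_{x_j})F̈ vanishes identically for all j ≤ d, then I_{α,β}(F̈) = 0 whenever α ≠ β. -/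

import Mathlib

/-!
The Wigner function of two Hermite functions `ψ_a`, `ψ_b` is, up to a constant, the complex Hermite
polynomial of bidegree `(a, b)` in `z − iζ` and `z + iζ`. This follows from Gaussian integration by
parts applied to the Fourier transform of `He_a(x + t) He_b(x − t) e^{−t²/2}`. Rotating `(z, ζ)` by
the angle `θ` therefore multiplies it by the character `e^{i(b − a)θ}`, so the product over all
coordinates is an eigenfunction of `x_j∂_{ξ_j} − ξ_j∂_{x_j}` with eigenvalue `i(β_j − α_j)`. That
vector field is divergence-free and annihilates the Gaussian density, hence it is skew-symmetric
for the Gaussian measure: applying it to `F` multiplies the oblique integral by `−i(β_j − α_j)`.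
-/

open Real MeasureTheory

/-- Hermite functions: `psi h j x = ((−1)^j/√(j!))·(h/2)^{j/2}·e^{x²/h}·(d/dx)^j(e^{−x²/h})(x)`. -/
noncomputable def psi (h : ℝ) (j : ℕ) (x : ℝ) : ℝ :=
  ((-1 : ℝ) ^ j / Real.sqrt (Nat.factorial j)) * (h / 2) ^ ((j : ℝ) / 2) *
    Real.exp (x ^ 2 / h) * iteratedDeriv j (fun t => Real.exp (-t ^ 2 / h)) x

/-- The one-dimensional Gaussian Wigner function `W_{h,ℝ}(f,g)`. -/
noncomputable def wigner1 (h : ℝ) (f g : ℝ → ℂ) (z ζ : ℝ) : ℂ :=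
  (Real.exp (ζ ^ 2 / h) : ℂ) *
    ∫ t : ℝ, Complex.exp (-2 * Complex.I * (ζ : ℂ) * (t : ℂ) / (h : ℂ)) * f (z + t) *
      (starRingEnd ℂ) (g (z - t)) * (Real.exp (-t ^ 2 / h) : ℂ) *
        (((π * h) ^ (-(1 : ℝ) / 2) : ℝ) : ℂ)

/-- The Gaussian measure `μ_{ℝ^{2d},s}` of variance `s` on `ℝ^d × ℝ^d`. -/
noncomputable def gaussMeasure2d (d : ℕ) (s : ℝ) : Measure ((Fin d → ℝ) × (Fin d → ℝ)) :=
  volume.withDensity fun p =>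
    ENNReal.ofReal ((2 * π * s) ^ (-(d : ℝ)) *
      Real.exp (-((∑ i, p.1 i ^ 2) + ∑ i, p.2 i ^ 2) / (2 * s)))

/-- The differential operator `x_j∂_{ξ_j} − ξ_j∂_{x_j}` on functions on `ℝ^d × ℝ^d`. -/
noncomputable def rotOpD (d : ℕ) (j : Fin d) (F : (Fin d → ℝ) × (Fin d → ℝ) → ℝ) :
    (Fin d → ℝ) × (Fin d → ℝ) → ℝ := fun p =>
  p.1 j * fderiv ℝ F p (0, Pi.single j 1) - p.2 j * fderiv ℝ F p (Pi.single j 1, 0)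

section TemperateGrowth

variable {E G : Type*} [NormedAddCommGroup E] [NormedSpace ℝ E] [NormedAddCommGroup G]
  [NormedSpace ℝ G]

lemma hasTemperateGrowth_fderiv_apply {f : E → G} (hf : f.HasTemperateGrowth) (v : E) :
    (fun p ↦ fderiv ℝ f p v).HasTemperateGrowth := by
  have hf' : (fderiv ℝ f).HasTemperateGrowth := by
    refine ⟨hf.1.fderiv_right (by simp), fun n ↦ ?_⟩
    simpa only [norm_iteratedFDeriv_fderiv] using hf.2 (n + 1)
  exact (ContinuousLinearMap.apply ℝ G v).hasTemperateGrowth.comp hf'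

lemma hasTemperateGrowth_ofReal {f : E → ℝ} (hf : f.HasTemperateGrowth) :
    (fun p ↦ (f p : ℂ)).HasTemperateGrowth :=
  Function.Complex.hasTemperateGrowth_ofReal.comp hf

lemma hasTemperateGrowth_prod {ι R : Type*} [NormedCommRing R] [NormedAlgebra ℝ R]
    {f : ι → E → R} {s : Finset ι} (hf : ∀ i ∈ s, (f i).HasTemperateGrowth) :
    (fun p ↦ ∏ i ∈ s, f i p).HasTemperateGrowth := by
  classical
  induction s using Finset.induction_on with
  | empty => simpa only [Finset.prod_empty] using Function.HasTemperateGrowth.const (1 : R)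
  | insert i s hi ih =>
    simp only [Finset.prod_insert hi]
    exact (hf i (s.mem_insert_self i)).fun_mul (ih fun k hk ↦ hf k (Finset.mem_insert_of_mem hk))

lemma one_add_pow_mul_exp_neg_mul_sq_le {c t : ℝ} (hc : 0 < c) (ht : 0 ≤ t) (n : ℕ) :
    (1 + t) ^ n * rexp (-(c * t ^ 2)) ≤ n.factorial * rexp (1 + 1 / (4 * c)) := by
  have pow_le : (1 + t) ^ n ≤ n.factorial * rexp (1 + t) :=
    (div_le_iff₀' (by positivity)).1 (pow_div_factorial_le_exp (1 + t) (by positivity) n)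
  have complete_square : 1 / (4 * c) - t + c * t ^ 2 = (2 * c * t - 1) ^ 2 / (4 * c) := by
    field_simp; ring
  have square_nonneg : 0 ≤ (2 * c * t - 1) ^ 2 / (4 * c) := by positivity
  calc (1 + t) ^ n * rexp (-(c * t ^ 2))
      ≤ n.factorial * rexp (1 + t) * rexp (-(c * t ^ 2)) := by gcongr
    _ = n.factorial * rexp (1 + t - c * t ^ 2) := by rw [mul_assoc, ← exp_add, ← sub_eq_add_neg]
    _ ≤ n.factorial * rexp (1 + 1 / (4 * c)) := by gcongr; linarith

end TemperateGrowth

section GaussianWeight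

variable {E : Type*} [NormedAddCommGroup E] [NormedSpace ℝ E] [MeasurableSpace E] [BorelSpace E]
  {f q : E → ℂ} {c : ℝ}

lemma integrable_mul_cexp_neg {μ : Measure E} [μ.HasTemperateGrowth]
    (hf : f.HasTemperateGrowth) (hq : Continuous q) (hc : 0 < c)
    (hcq : ∀ p, c * ‖p‖ ^ 2 ≤ (q p).re) :
    Integrable (fun p ↦ f p * Complex.exp (-q p)) μ := by
  obtain ⟨k, C, hfC⟩ := hf.2 0
  simp only [norm_iteratedFDeriv_zero] at hfC
  let r := μ.integrablePower
  let M := (k + r).factorial * rexp (1 + 1 / (4 * c))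
  refine (μ.integrable_pow_neg_integrablePower.const_mul (C * M)).mono'
    (hf.1.continuous.mul hq.neg.cexp).aestronglyMeasurable (.of_forall fun p ↦ ?_)
  have C_nonneg : 0 ≤ C := nonneg_of_mul_nonneg_left ((norm_nonneg _).trans (hfC p)) (by positivity)
  calc ‖f p * Complex.exp (-q p)‖
      = ‖f p‖ * rexp (-(q p).re) := by rw [norm_mul, Complex.norm_exp, Complex.neg_re]
    _ ≤ C * (1 + ‖p‖) ^ k * rexp (-(c * ‖p‖ ^ 2)) := by
      gcongr
      exacts [hfC p, hcq p]
    _ = C * ((1 + ‖p‖) ^ (k + r) * rexp (-(c * ‖p‖ ^ 2))) * (1 + ‖p‖) ^ (-(r : ℝ)) := by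
      rw [rpow_neg (by positivity), rpow_natCast, pow_add]
      field_simp
    _ ≤ C * M * (1 + ‖p‖) ^ (-(r : ℝ)) := by
      gcongr
      exact one_add_pow_mul_exp_neg_mul_sq_le hc (norm_nonneg p) _

variable [FiniteDimensional ℝ E] {μ : Measure E} [μ.IsAddHaarMeasure]

lemma integral_fderiv_mul_cexp_neg (hf : f.HasTemperateGrowth) (hq : q.HasTemperateGrowth)
    (hc : 0 < c) (hcq : ∀ p, c * ‖p‖ ^ 2 ≤ (q p).re) (v : E) :
    ∫ p, fderiv ℝ f p v * Complex.exp (-q p) ∂μ =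
      ∫ p, f p * fderiv ℝ q p v * Complex.exp (-q p) ∂μ := by
  have integrable {u : E → ℂ} (hu : u.HasTemperateGrowth) :
      Integrable (fun p ↦ u p * Complex.exp (-q p)) μ :=
    integrable_mul_cexp_neg hu hq.1.continuous hc hcq
  have hq_diff : Differentiable ℝ q := hq.1.differentiable (by simp)
  have fderiv_weight (p : E) : fderiv ℝ (fun p ↦ Complex.exp (-q p)) p v =
      -(fderiv ℝ q p v * Complex.exp (-q p)) := by
    rw [(hq_diff p).hasFDerivAt.fun_neg.cexp.fderiv]
    simp [mul_comm]
  have parts := integral_mul_fderiv_eq_neg_fderiv_mul_of_integrable (μ := μ) (v := v)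
    (integrable (hasTemperateGrowth_fderiv_apply hf v))
    (by
      simpa only [fderiv_weight, mul_neg, mul_assoc] using
        (integrable (hf.fun_mul (hasTemperateGrowth_fderiv_apply hq v))).fun_neg)
    (integrable hf) (fun p _ ↦ hf.1.differentiable (by simp) p) (fun p _ ↦ (hq_diff p).neg.cexp)
  simpa only [fderiv_weight, mul_neg, integral_neg, neg_inj, mul_assoc] using parts.symm

lemma integral_clm_mul_fderiv_mul_cexp_neg (hf : f.HasTemperateGrowth)
    (hq : q.HasTemperateGrowth) (hc : 0 < c) (hcq : ∀ p, c * ‖p‖ ^ 2 ≤ (q p).re)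
    {ℓ : E →L[ℝ] ℝ} {v : E} (hℓv : ℓ v = 0) :
    ∫ p, ℓ p * fderiv ℝ f p v * Complex.exp (-q p) ∂μ =
      ∫ p, ℓ p * (f p * fderiv ℝ q p v) * Complex.exp (-q p) ∂μ := by
  have hℓf : (fun p ↦ ℓ p • f p).HasTemperateGrowth := ℓ.hasTemperateGrowth.fun_smul hf
  have fderiv_smul (p : E) : fderiv ℝ (fun p ↦ ℓ p • f p) p v = ℓ p * fderiv ℝ f p v := by
    rw [fderiv_fun_smul ℓ.differentiableAt (hf.1.differentiable (by simp) p)]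
    simp [hℓv]
  have parts := integral_fderiv_mul_cexp_neg (μ := μ) hℓf hq hc hcq v
  simp only [fderiv_smul] at parts
  simpa only [Complex.real_smul, mul_assoc] using parts

end GaussianWeight

section HermiteGaussian

open Polynomial

lemma derivative_hermite (n : ℕ) : derivative (hermite n) = n * hermite (n - 1) := by
  induction n with
  | zero => simp
  | succ n ih =>
    rw [Nat.add_sub_cancel, hermite_succ, derivative_sub, derivative_mul, derivative_X, ih]
    cases n with
    | zero => simp
    | succ n =>
      rw [derivative_natCast_mul, Nat.add_sub_cancel, hermite_succ n]
      push_cast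
      ring

lemma psi_eq_hermite {h : ℝ} (hh : 0 < h) (j : ℕ) (x : ℝ) :
    psi h j x = (√j.factorial)⁻¹ * aeval (√(2 / h) * x) (hermite j) := by
  have sq_scale : √(2 / h) ^ 2 = 2 / h := sq_sqrt (by positivity)
  have gaussian_rescale : (fun t ↦ rexp (-t ^ 2 / h)) =
      fun t ↦ rexp (-((√(2 / h) * t) ^ 2 / 2)) := by
    ext t
    simp only [mul_pow, sq_scale]
    congr 1
    field_simp
  have scale_cancel : (h / 2) ^ ((j : ℝ) / 2) * √(2 / h) ^ j = 1 := by
    rw [← inv_div h 2, sqrt_inv, sqrt_eq_rpow, inv_pow, ← rpow_mul_natCast (by positivity),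
      one_div_mul_eq_div, mul_inv_cancel₀ (by positivity)]
  have sign_cancel : (-1 : ℝ) ^ j * (-1) ^ j = 1 := by rw [← mul_pow]; norm_num
  have exp_cancel : rexp (x ^ 2 / h) * rexp (-((√(2 / h) * x) ^ 2 / 2)) = 1 := by
    rw [← exp_add, mul_pow, sq_scale, ← exp_zero]
    congr 1
    field_simp
    ring
  have rodrigues : iteratedDeriv j (fun t ↦ rexp (-t ^ 2 / h)) x =
      √(2 / h) ^ j * ((-1) ^ j * aeval (√(2 / h) * x) (hermite j) *
        rexp (-((√(2 / h) * x) ^ 2 / 2))) := by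
    rw [gaussian_rescale, ← deriv_gaussian_eq_hermite_mul_gaussian, ← iteratedDeriv_eq_iterate]
    exact congrFun (iteratedDeriv_comp_const_mul (f := fun y ↦ rexp (-(y ^ 2 / 2)))
      (by fun_prop) _) x
  rw [psi, rodrigues]
  set H := aeval (√(2 / h) * x) (hermite j)
  calc _ = (√j.factorial)⁻¹ * H * ((-1) ^ j * (-1) ^ j) *
        ((h / 2) ^ ((j : ℝ) / 2) * √(2 / h) ^ j) *
          (rexp (x ^ 2 / h) * rexp (-((√(2 / h) * x) ^ 2 / 2))) := by ring
    _ = _ := by rw [sign_cancel, scale_cancel, exp_cancel, mul_one, mul_one, mul_one]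

lemma ofReal_psi {h : ℝ} (hh : 0 < h) (j : ℕ) (x : ℝ) :
    (psi h j x : ℂ) = (√j.factorial)⁻¹ * aeval (√(2 / h) * x : ℂ) (hermite j) := by
  rw [psi_eq_hermite hh, ← Complex.ofReal_mul √(2 / h), ← Complex.coe_algebraMap,
    aeval_algebraMap_apply]
  simp

lemma hasTemperateGrowth_eval_ofReal (P : ℂ[X]) :
    (fun t : ℝ ↦ P.eval (t : ℂ)).HasTemperateGrowth := by
  simp only [eval_eq_sum_range]
  fun_prop

lemma mul_sq_norm_le_re_oscillating_exponent (y t : ℝ) :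
    1 / 2 * ‖t‖ ^ 2 ≤ ((t : ℂ) ^ 2 / 2 + Complex.I * y * t).re := by
  have re_sq : ((t : ℂ) ^ 2).re = t ^ 2 := by rw [← Complex.ofReal_pow, Complex.ofReal_re]
  simp [div_eq_inv_mul, re_sq]

lemma integrable_eval_mul_cexp (y : ℝ) (P : ℂ[X]) :
    Integrable fun t : ℝ ↦ P.eval (t : ℂ) * Complex.exp (-((t : ℂ) ^ 2 / 2 + Complex.I * y * t)) :=
  integrable_mul_cexp_neg (hasTemperateGrowth_eval_ofReal P) (by fun_prop) one_half_pos
    (mul_sq_norm_le_re_oscillating_exponent y)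

/-- The Fourier transform at frequency `y` of a polynomial times the Gaussian `e^{−t²/2}`, as a
linear functional of the polynomial. -/
noncomputable def gaussFourier (y : ℝ) : ℂ[X] →ₗ[ℂ] ℂ where
  toFun P := ∫ t : ℝ, P.eval (t : ℂ) * Complex.exp (-((t : ℂ) ^ 2 / 2 + Complex.I * y * t))
  map_add' P Q := by
    simp only [eval_add, add_mul]
    exact integral_add (integrable_eval_mul_cexp y P) (integrable_eval_mul_cexp y Q)
  map_smul' r P := by
    simp only [eval_smul, smul_eq_mul, mul_assoc, RingHom.id_apply, integral_const_mul]

lemma gaussFourier_apply (y : ℝ) (P : ℂ[X]) : gaussFourier y P =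
    ∫ t : ℝ, P.eval (t : ℂ) * Complex.exp (-((t : ℂ) ^ 2 / 2 + Complex.I * y * t)) := rfl

lemma gaussFourier_one (y : ℝ) : gaussFourier y 1 = √(2 * π) * rexp (-(y ^ 2 / 2)) := by
  have scaled := fourierIntegral_gaussian (b := 1 / 2) (by norm_num) (-y : ℝ)
  have sqrt_two_pi : (π / (1 / 2) : ℂ) ^ (1 / 2 : ℂ) = √(2 * π) := by
    rw [sqrt_eq_rpow, Complex.ofReal_cpow (by positivity)]
    push_cast
    ring_nf
  calc gaussFourier y 1 = ∫ t : ℝ, Complex.exp (Complex.I * (-y : ℝ) * t) *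
        Complex.exp (-(1 / 2) * t ^ 2) := by
        simp only [gaussFourier_apply, eval_one, one_mul, ← Complex.exp_add]
        congr! 3
        push_cast
        ring
    _ = √(2 * π) * rexp (-(y ^ 2 / 2)) := by
      rw [scaled, sqrt_two_pi]
      push_cast
      ring_nf

lemma gaussFourier_derivative (y : ℝ) (P : ℂ[X]) :
    gaussFourier y (derivative P) = gaussFourier y ((X + C (Complex.I * y)) * P) := by
  have hq (t : ℝ) : HasDerivAt (fun t : ℝ ↦ (t : ℂ) ^ 2 / 2 + Complex.I * y * t)
      (t + Complex.I * y) t := by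
    have ht : HasDerivAt (fun t : ℝ ↦ (t : ℂ)) 1 t := Complex.ofRealCLM.hasDerivAt
    convert! ((ht.pow 2).div_const 2).add (ht.const_mul (Complex.I * y)) using 1
    simp
  have parts := integral_fderiv_mul_cexp_neg (μ := volume) (hasTemperateGrowth_eval_ofReal P)
    (q := fun t : ℝ ↦ (t : ℂ) ^ 2 / 2 + Complex.I * y * t)
    (by simp only [div_eq_mul_inv]; fun_prop) one_half_pos
    (mul_sq_norm_le_re_oscillating_exponent y) 1
  have deriv_eval (t : ℝ) : deriv (fun t : ℝ ↦ P.eval (t : ℂ)) t = (derivative P).eval (t : ℂ) :=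
    (P.hasDerivAt (t : ℂ)).comp_ofReal.deriv
  simp only [fderiv_apply_one_eq_deriv, deriv_eval, (hq _).deriv] at parts
  simpa only [gaussFourier_apply, eval_mul, eval_add, eval_X, eval_C,
    mul_comm (P.eval _)] using parts

/-- The complex (Itô) Hermite polynomials in independent variables `w`, `v`, normalised so that the
top-degree term is `w ^ a * v ^ b`; the usual ones are the values at `w = conj v`. -/
noncomputable def complexHermite : ℕ → ℕ → ℂ → ℂ → ℂ
  | 0, b, _, v => v ^ b
  | a + 1, b, w, v => w * complexHermite a b w v - b * complexHermite a (b - 1) w v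

/-- The polynomial `He_a(x + t) He_b(x − t)` in the variable `t`. -/
noncomputable def hermiteProduct (x : ℂ) (a b : ℕ) : ℂ[X] :=
  aeval (C x + X) (hermite a) * aeval (C x - X) (hermite b)

lemma derivative_aeval_hermite (P : ℂ[X]) (n : ℕ) :
    derivative (aeval P (hermite n)) = n * aeval P (hermite (n - 1)) * derivative P := by
  have chain_rule := ((derivative' (R := ℂ)).restrictScalars ℤ).map_aeval (hermite n) P
  rw [derivative_hermite, map_mul, map_natCast] at chain_rule
  exact chain_rule

lemma eval_hermiteProduct (x t : ℂ) (a b : ℕ) : (hermiteProduct x a b).eval t =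
    aeval (x + t) (hermite a) * aeval (x - t) (hermite b) := by
  have aeval_eval (P : ℂ[X]) (n : ℕ) :
      (aeval P (hermite n)).eval t = aeval (P.eval t) (hermite n) := by
    simpa using (aeval_algHom_apply ((aeval (R := ℂ) t).restrictScalars ℤ) P (hermite n)).symm
  simp only [hermiteProduct, eval_mul, aeval_eval, eval_add, eval_sub, eval_C, eval_X]

lemma derivative_hermiteProduct (x : ℂ) (a b : ℕ) : derivative (hermiteProduct x a b) =
    a * hermiteProduct x (a - 1) b - b * hermiteProduct x a (b - 1) := by
  simp only [hermiteProduct, derivative_mul, derivative_aeval_hermite, derivative_add,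
    derivative_sub, derivative_C, derivative_X]
  ring

lemma hermiteProduct_succ_left (x : ℂ) (a b : ℕ) : hermiteProduct x (a + 1) b =
    (C x + X) * hermiteProduct x a b - derivative (hermiteProduct x a b) -
      (b : ℂ[X]) * hermiteProduct x a (b - 1) := by
  rw [derivative_hermiteProduct]
  simp only [hermiteProduct, hermite_succ, derivative_hermite, map_sub, map_mul, map_natCast,
    aeval_X]
  ring

lemma hermiteProduct_zero_succ (x : ℂ) (b : ℕ) : hermiteProduct x 0 (b + 1) =
    (C x - X) * hermiteProduct x 0 b + derivative (hermiteProduct x 0 b) := by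
  rw [derivative_hermiteProduct]
  simp only [hermiteProduct, hermite_succ, derivative_hermite, map_sub, map_mul, map_natCast,
    aeval_X, Nat.cast_zero]
  ring

lemma gaussFourier_hermiteProduct (x : ℂ) (y : ℝ) (a b : ℕ) :
    gaussFourier y (hermiteProduct x a b) = √(2 * π) * rexp (-(y ^ 2 / 2)) *
      complexHermite a b (x - Complex.I * y) (x + Complex.I * y) := by
  induction a generalizing b with
  | zero =>
    induction b with
    | zero => simp [hermiteProduct, complexHermite, gaussFourier_one]
    | succ b ih =>
      have raise : gaussFourier y (hermiteProduct x 0 (b + 1)) =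
          (x + Complex.I * y) * gaussFourier y (hermiteProduct x 0 b) := by
        rw [hermiteProduct_zero_succ, map_add, gaussFourier_derivative, ← map_add,
          ← smul_eq_mul (x + _), ← map_smul, smul_eq_C_mul, C_add]
        ring_nf
      rw [raise, ih, complexHermite, complexHermite]
      ring
  | succ a ih =>
    have raise : gaussFourier y (hermiteProduct x (a + 1) b) =
        (x - Complex.I * y) * gaussFourier y (hermiteProduct x a b) -
          b * gaussFourier y (hermiteProduct x a (b - 1)) := by
      rw [hermiteProduct_succ_left, map_sub, map_sub, gaussFourier_derivative, ← map_sub,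
        ← nsmul_eq_mul, map_nsmul, nsmul_eq_mul, ← smul_eq_mul (x - _), ← map_smul, smul_eq_C_mul,
        C_sub]
      ring_nf
    rw [raise, ih, ih, complexHermite]
    ring

end HermiteGaussian

section HermiteWigner

lemma wigner1_psi_integrand {h : ℝ} (hh : 0 < h) (a b : ℕ) (z ζ t : ℝ) :
    Complex.exp (-2 * Complex.I * ζ * t / h) * psi h a (z + t) *
        (starRingEnd ℂ) (psi h b (z - t)) * rexp (-t ^ 2 / h) =
      (√a.factorial)⁻¹ * (√b.factorial)⁻¹ *
        ((hermiteProduct (√(2 / h) * z) a b).eval ((√(2 / h) * t : ℝ) : ℂ) *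
          Complex.exp (-(((√(2 / h) * t : ℝ) : ℂ) ^ 2 / 2 +
            Complex.I * (√(2 / h) * ζ : ℝ) * (√(2 / h) * t : ℝ)))) := by
  have s_sq : (√(2 / h) : ℂ) ^ 2 = 2 / h := by
    exact_mod_cast sq_sqrt (show 0 ≤ 2 / h by positivity)
  have exponent : Complex.exp (-(((√(2 / h) * t : ℝ) : ℂ) ^ 2 / 2 +
        Complex.I * (√(2 / h) * ζ : ℝ) * (√(2 / h) * t : ℝ))) =
      Complex.exp (-2 * Complex.I * ζ * t / h) * rexp (-t ^ 2 / h) := by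
    rw [Complex.ofReal_exp, ← Complex.exp_add]
    push_cast
    congr 1
    linear_combination -(t ^ 2 / 2 + Complex.I * ζ * t) * s_sq
  rw [Complex.conj_ofReal, ofReal_psi hh, ofReal_psi hh, exponent, eval_hermiteProduct]
  push_cast
  simp only [mul_add, mul_sub]
  ring

lemma wigner1_psi_eq_gaussFourier {h : ℝ} (hh : 0 < h) (a b : ℕ) (z ζ : ℝ) :
    wigner1 h (fun t ↦ (psi h a t : ℂ)) (fun t ↦ (psi h b t : ℂ)) z ζ =
      (√a.factorial)⁻¹ * (√b.factorial)⁻¹ *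
        (rexp (ζ ^ 2 / h) * (π * h) ^ (-(1 : ℝ) / 2) * (√(2 / h))⁻¹ : ℝ) *
          gaussFourier (√(2 / h) * ζ) (hermiteProduct (√(2 / h) * z) a b) := by
  have rescaled := Measure.integral_comp_mul_left (fun u : ℝ ↦
    (hermiteProduct (√(2 / h) * z) a b).eval (u : ℂ) *
      Complex.exp (-((u : ℂ) ^ 2 / 2 + Complex.I * (√(2 / h) * ζ : ℝ) * u))) √(2 / h)
  rw [← gaussFourier_apply, abs_of_pos (by positivity), Complex.real_smul] at rescaled
  simp only [wigner1, wigner1_psi_integrand hh, integral_mul_const, integral_const_mul, rescaled]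
  push_cast
  ring

lemma wigner1_psi {h : ℝ} (hh : 0 < h) (a b : ℕ) (z ζ : ℝ) :
    wigner1 h (fun t ↦ (psi h a t : ℂ)) (fun t ↦ (psi h b t : ℂ)) z ζ =
      (√a.factorial)⁻¹ * (√b.factorial)⁻¹ *
        complexHermite a b (√(2 / h) * (z - Complex.I * ζ)) (√(2 / h) * (z + Complex.I * ζ)) := by
  have normalization : (π * h) ^ (-(1 : ℝ) / 2) * (√(2 / h))⁻¹ * √(2 * π) = 1 := by
    rw [neg_div, rpow_neg (by positivity), ← sqrt_eq_rpow, ← sqrt_inv, ← sqrt_inv,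
      ← sqrt_mul (by positivity), ← sqrt_mul (by positivity), sqrt_eq_one]
    field_simp
  have gaussian_cancel : rexp (ζ ^ 2 / h) * rexp (-((√(2 / h) * ζ) ^ 2 / 2)) = 1 := by
    rw [← exp_add, mul_pow, sq_sqrt (by positivity), ← exp_zero]
    congr 1
    field_simp
    ring
  have constant : ((rexp (ζ ^ 2 / h) * (π * h) ^ (-(1 : ℝ) / 2) * (√(2 / h))⁻¹ : ℝ) : ℂ) *
      (√(2 * π) * rexp (-((√(2 / h) * ζ) ^ 2 / 2))) = 1 := by
    rw [← Complex.ofReal_mul, ← Complex.ofReal_mul, Complex.ofReal_eq_one]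
    linear_combination gaussian_cancel +
      rexp (ζ ^ 2 / h) * rexp (-((√(2 / h) * ζ) ^ 2 / 2)) * normalization
  rw [wigner1_psi_eq_gaussFourier hh, gaussFourier_hermiteProduct, mul_assoc, ← mul_assoc _ (_ * _),
    constant, one_mul]
  push_cast
  simp only [mul_add, mul_sub, mul_left_comm Complex.I]

lemma complexHermite_inv_mul_mul {c : ℂ} (hc : c ≠ 0) (a b : ℕ) (w v : ℂ) :
    complexHermite a b (c⁻¹ * w) (c * v) = c ^ ((b : ℤ) - a) * complexHermite a b w v := by
  induction a generalizing b with
  | zero => simp [complexHermite, mul_pow]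
  | succ a ih =>
    have lower : c⁻¹ * c ^ ((b : ℤ) - a) = c ^ ((b : ℤ) - (a + 1 : ℕ)) := by
      rw [Nat.cast_succ, ← sub_sub, zpow_sub_one₀ hc, mul_comm]
    have raise : (b : ℂ) * c ^ (((b - 1 : ℕ) : ℤ) - a) = b * c ^ ((b : ℤ) - (a + 1 : ℕ)) := by
      cases b with
      | zero => simp
      | succ b => simp
    simp only [complexHermite, ih]
    linear_combination w * complexHermite a b w v * lower - complexHermite a (b - 1) w v * raise

lemma hasTemperateGrowth_complexHermite {E : Type*} [NormedAddCommGroup E] [NormedSpace ℝ E]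
    {w v : E → ℂ} (hw : w.HasTemperateGrowth) (hv : v.HasTemperateGrowth) (a b : ℕ) :
    (fun p ↦ complexHermite a b (w p) (v p)).HasTemperateGrowth := by
  induction a generalizing b with
  | zero => simp only [complexHermite]; fun_prop
  | succ a ih => simp only [complexHermite]; fun_prop

lemma hasTemperateGrowth_wigner1_psi {E : Type*} [NormedAddCommGroup E] [NormedSpace ℝ E]
    {z ζ : E → ℝ} (hz : z.HasTemperateGrowth) (hζ : ζ.HasTemperateGrowth)
    {h : ℝ} (hh : 0 < h) (a b : ℕ) :
    (fun p ↦ wigner1 h (fun t ↦ (psi h a t : ℂ)) (fun t ↦ (psi h b t : ℂ))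
      (z p) (ζ p)).HasTemperateGrowth := by
  have := hasTemperateGrowth_ofReal hz
  have := hasTemperateGrowth_ofReal hζ
  simp only [wigner1_psi hh]
  exact .fun_mul (by fun_prop) (hasTemperateGrowth_complexHermite (by fun_prop) (by fun_prop) a b)

lemma wigner1_psi_rotation {h : ℝ} (hh : 0 < h) (a b : ℕ) (θ z ζ : ℝ) :
    wigner1 h (fun t ↦ (psi h a t : ℂ)) (fun t ↦ (psi h b t : ℂ))
        (cos θ * z - sin θ * ζ) (sin θ * z + cos θ * ζ) =
      Complex.exp (Complex.I * (b - a) * θ) *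
        wigner1 h (fun t ↦ (psi h a t : ℂ)) (fun t ↦ (psi h b t : ℂ)) z ζ := by
  set c := Complex.exp (θ * Complex.I) with hc
  have c_eq : c = Complex.cos θ + Complex.sin θ * Complex.I := Complex.exp_mul_I θ
  have c_inv_eq : c⁻¹ = Complex.cos θ - Complex.sin θ * Complex.I := by
    rw [hc, ← Complex.exp_neg, ← neg_mul, Complex.exp_mul_I, Complex.cos_neg, Complex.sin_neg,
      neg_mul, sub_eq_add_neg]
  have w_eq : (√(2 / h) : ℂ) * ((cos θ * z - sin θ * ζ : ℝ) -
      Complex.I * (sin θ * z + cos θ * ζ : ℝ)) = c⁻¹ * (√(2 / h) * (z - Complex.I * ζ)) := by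
    rw [c_inv_eq]
    push_cast
    linear_combination (-√(2 / h) * Complex.sin θ * ζ) * Complex.I_sq
  have v_eq : (√(2 / h) : ℂ) * ((cos θ * z - sin θ * ζ : ℝ) +
      Complex.I * (sin θ * z + cos θ * ζ : ℝ)) = c * (√(2 / h) * (z + Complex.I * ζ)) := by
    rw [c_eq]
    push_cast
    linear_combination (-√(2 / h) * Complex.sin θ * ζ) * Complex.I_sq
  have character : c ^ ((b : ℤ) - a) = Complex.exp (Complex.I * (b - a) * θ) := by
    rw [hc, ← Complex.exp_int_mul]
    push_cast
    ring_nf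
  rw [wigner1_psi hh, wigner1_psi hh, w_eq, v_eq,
    complexHermite_inv_mul_mul (Complex.exp_ne_zero _), character]
  ring

end HermiteWigner

/-- Phase space `ℝ^d × ℝ^d` with points `(x, ξ)`; its norm is the supremum norm. -/
abbrev PhaseSpace (d : ℕ) : Type := (Fin d → ℝ) × (Fin d → ℝ)

namespace PhaseSpace

variable {G : Type*} [NormedAddCommGroup G] [NormedSpace ℝ G] {d : ℕ} {j : Fin d}

/-- The squared Euclidean norm `|x|² + |ξ|²`. -/
def euclideanSq (p : PhaseSpace d) : ℝ := ∑ i, (p.1 i ^ 2 + p.2 i ^ 2)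

/-- The vector field `x_j∂_{ξ_j} − ξ_j∂_{x_j}`. -/
def rotField (j : Fin d) (p : PhaseSpace d) : PhaseSpace d :=
  p.1 j • (0, Pi.single j 1) - p.2 j • (Pi.single j 1, 0)

/-- The rotation by the angle `θ` in the `(x_j, ξ_j)` plane, that is, the flow of `rotField j`. -/
noncomputable def planeRotation (j : Fin d) (θ : ℝ) (p : PhaseSpace d) : PhaseSpace d :=
  (Function.update p.1 j (cos θ * p.1 j - sin θ * p.2 j),
    Function.update p.2 j (sin θ * p.1 j + cos θ * p.2 j))

lemma planeRotation_zero (j : Fin d) (p : PhaseSpace d) : planeRotation j 0 p = p := by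
  simp [planeRotation]

lemma hasDerivAt_planeRotation_zero (j : Fin d) (p : PhaseSpace d) :
    HasDerivAt (fun θ ↦ planeRotation j θ p) (rotField j p) 0 := by
  have hx : HasDerivAt (fun θ ↦ cos θ * p.1 j - sin θ * p.2 j) (-p.2 j) 0 := by
    simpa using ((hasDerivAt_cos 0).mul_const (p.1 j)).fun_sub
      ((hasDerivAt_sin 0).mul_const (p.2 j))
  have hξ : HasDerivAt (fun θ ↦ sin θ * p.1 j + cos θ * p.2 j) (p.1 j) 0 := by
    simpa using ((hasDerivAt_sin 0).mul_const (p.1 j)).fun_add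
      ((hasDerivAt_cos 0).mul_const (p.2 j))
  convert! ((hasDerivAt_update p.1 j _).scomp 0 hx).prodMk ((hasDerivAt_update p.2 j _).scomp 0 hξ)
    using 1
  simp [rotField]

lemma fderiv_rotField_of_equivariant {f : PhaseSpace d → ℂ} {p : PhaseSpace d} {r : ℂ}
    (hf : DifferentiableAt ℝ f p)
    (h_equiv : ∀ θ : ℝ, f (planeRotation j θ p) = Complex.exp (r * θ) * f p) :
    fderiv ℝ f p (rotField j p) = r * f p := by
  have along_orbit : HasDerivAt (fun θ ↦ f (planeRotation j θ p)) (fderiv ℝ f p (rotField j p)) 0 :=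
    hf.hasFDerivAt.comp_hasDerivAt_of_eq 0 (hasDerivAt_planeRotation_zero j p)
      (planeRotation_zero j p).symm
  have character : HasDerivAt (fun θ : ℝ ↦ Complex.exp (r * θ) * f p) (r * f p) 0 := by
    simpa using ((Complex.ofRealCLM.hasDerivAt (x := 0) |>.const_mul r).cexp.mul_const (f p))
  exact along_orbit.unique (by simpa only [h_equiv] using character)

lemma sq_norm_le_euclideanSq (p : PhaseSpace d) : ‖p‖ ^ 2 ≤ euclideanSq p := by
  have coordinate (i : Fin d) : p.1 i ^ 2 + p.2 i ^ 2 ≤ euclideanSq p :=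
    Finset.single_le_sum (f := fun i ↦ p.1 i ^ 2 + p.2 i ^ 2) (fun _ _ ↦ by positivity)
      (Finset.mem_univ i)
  have euclideanSq_nonneg : 0 ≤ euclideanSq p := Finset.sum_nonneg fun _ _ ↦ by positivity
  rw [← le_sqrt (norm_nonneg p) euclideanSq_nonneg, norm_prod_le_iff,
    pi_norm_le_iff_of_nonneg (sqrt_nonneg _), pi_norm_le_iff_of_nonneg (sqrt_nonneg _)]
  exact ⟨fun i ↦ abs_le_sqrt (by nlinarith [coordinate i]),
    fun i ↦ abs_le_sqrt (by nlinarith [coordinate i])⟩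

lemma euclideanSq_planeRotation (j : Fin d) (θ : ℝ) (p : PhaseSpace d) :
    euclideanSq (planeRotation j θ p) = euclideanSq p := by
  refine Finset.sum_congr rfl fun l _ ↦ ?_
  rcases eq_or_ne l j with rfl | hl
  · simp only [planeRotation, Function.update_self]
    linear_combination (p.1 l ^ 2 + p.2 l ^ 2) * sin_sq_add_cos_sq θ
  · simp only [planeRotation, Function.update_of_ne hl]

lemma hasTemperateGrowth_fst_apply (i : Fin d) :
    (fun p : PhaseSpace d ↦ p.1 i).HasTemperateGrowth :=
  ((ContinuousLinearMap.proj i).comp (.fst ℝ _ _) : PhaseSpace d →L[ℝ] ℝ).hasTemperateGrowth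

lemma hasTemperateGrowth_snd_apply (i : Fin d) :
    (fun p : PhaseSpace d ↦ p.2 i).HasTemperateGrowth :=
  ((ContinuousLinearMap.proj i).comp (.snd ℝ _ _) : PhaseSpace d →L[ℝ] ℝ).hasTemperateGrowth

lemma hasTemperateGrowth_euclideanSq : (euclideanSq (d := d)).HasTemperateGrowth := by
  have := hasTemperateGrowth_fst_apply (d := d)
  have := hasTemperateGrowth_snd_apply (d := d)
  unfold euclideanSq
  fun_prop

instance isAddHaarMeasure_volume : (volume : Measure (PhaseSpace d)).IsAddHaarMeasure :=
  Measure.prod.instIsAddHaarMeasure _ _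

lemma fderiv_rotField (f : PhaseSpace d → G) (j : Fin d) (p : PhaseSpace d) :
    fderiv ℝ f p (rotField j p) =
      p.1 j • fderiv ℝ f p (0, Pi.single j 1) - p.2 j • fderiv ℝ f p (Pi.single j 1, 0) := by
  simp only [rotField, map_sub, map_smul]

lemma hasTemperateGrowth_fderiv_rotField {f : PhaseSpace d → G} (hf : f.HasTemperateGrowth)
    (j : Fin d) : (fun p ↦ fderiv ℝ f p (rotField j p)).HasTemperateGrowth := by
  simp only [fderiv_rotField]
  exact ((hasTemperateGrowth_fst_apply j).fun_smul (hasTemperateGrowth_fderiv_apply hf _)).fun_sub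
    ((hasTemperateGrowth_snd_apply j).fun_smul (hasTemperateGrowth_fderiv_apply hf _))

lemma integral_fderiv_rotField_mul_cexp_neg {f q : PhaseSpace d → ℂ} {c : ℝ}
    (hf : f.HasTemperateGrowth) (hq : q.HasTemperateGrowth) (hc : 0 < c)
    (hcq : ∀ p, c * ‖p‖ ^ 2 ≤ (q p).re) (hq_rot : ∀ p, fderiv ℝ q p (rotField j p) = 0) :
    ∫ p, fderiv ℝ f p (rotField j p) * Complex.exp (-q p) = 0 := by
  have integrable {g : PhaseSpace d → ℂ} (hg : g.HasTemperateGrowth) :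
      Integrable fun p ↦ g p * Complex.exp (-q p) :=
    integrable_mul_cexp_neg hg hq.1.continuous hc hcq
  let x : PhaseSpace d →L[ℝ] ℝ := (ContinuousLinearMap.proj j).comp (.fst ℝ _ _)
  let ξ : PhaseSpace d →L[ℝ] ℝ := (ContinuousLinearMap.proj j).comp (.snd ℝ _ _)
  have := hasTemperateGrowth_ofReal x.hasTemperateGrowth
  have := hasTemperateGrowth_ofReal ξ.hasTemperateGrowth
  have hf' := hasTemperateGrowth_fderiv_apply hf
  have hq' := hasTemperateGrowth_fderiv_apply hq
  let e : PhaseSpace d := (Pi.single j 1, 0)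
  let ε : PhaseSpace d := (0, Pi.single j 1)
  calc ∫ p, fderiv ℝ f p (rotField j p) * Complex.exp (-q p)
      = (∫ p, x p * fderiv ℝ f p ε * Complex.exp (-q p)) -
          ∫ p, ξ p * fderiv ℝ f p e * Complex.exp (-q p) := by
        rw [← integral_sub (integrable (by fun_prop)) (integrable (by fun_prop))]
        simp only [fderiv_rotField, Complex.real_smul, sub_mul]
        rfl
    _ = (∫ p, x p * (f p * fderiv ℝ q p ε) * Complex.exp (-q p)) -
          ∫ p, ξ p * (f p * fderiv ℝ q p e) * Complex.exp (-q p) := by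
        rw [integral_clm_mul_fderiv_mul_cexp_neg hf hq hc hcq (by simp [x, ε]),
          integral_clm_mul_fderiv_mul_cexp_neg hf hq hc hcq (by simp [ξ, e])]
    _ = ∫ p, f p * fderiv ℝ q p (rotField j p) * Complex.exp (-q p) := by
        rw [← integral_sub (integrable (by fun_prop)) (integrable (by fun_prop))]
        simp only [fderiv_rotField]
        congr! 2
        simp only [ContinuousLinearMap.comp_apply, ContinuousLinearMap.coe_fst',
          ContinuousLinearMap.coe_snd', ContinuousLinearMap.proj_apply, Complex.real_smul,
          x, ξ, e, ε]
        ring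
    _ = 0 := by simp only [hq_rot, mul_zero, zero_mul, integral_zero]

end PhaseSpace

section GaussMeasure

open PhaseSpace

variable {d : ℕ} {s : ℝ}

/-- The exponent `q = (|x|² + |ξ|²)/(2s)` of the Gaussian density `(2πs)^{−d} e^{−q}` on phase
space, complex-valued so as to act as a weight on complex functions. -/
noncomputable def gaussExponent (s : ℝ) (p : PhaseSpace d) : ℂ := (euclideanSq p / (2 * s) : ℝ)

/-- The density `(2πs)^{−d} e^{−(|x|² + |ξ|²)/(2s)}` of the Gaussian measure on phase space. -/
noncomputable def gaussDensity (s : ℝ) (p : PhaseSpace d) : ℝ :=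
  (2 * π * s) ^ (-(d : ℝ)) * rexp (-(euclideanSq p / (2 * s)))

lemma gaussMeasure2d_eq_withDensity (d : ℕ) (s : ℝ) :
    gaussMeasure2d d s = volume.withDensity fun p ↦ ENNReal.ofReal (gaussDensity s p) := by
  simp only [gaussMeasure2d, gaussDensity, euclideanSq, Finset.sum_add_distrib, neg_div]

lemma measurable_ofReal_gaussDensity (d : ℕ) (s : ℝ) :
    Measurable fun p : PhaseSpace d ↦ ENNReal.ofReal (gaussDensity s p) := by
  unfold gaussDensity euclideanSq
  fun_prop

lemma toReal_ofReal_gaussDensity_smul (hs : 0 ≤ s) (p : PhaseSpace d) (z : ℂ) :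
    (ENNReal.ofReal (gaussDensity s p)).toReal • z =
      ((2 * π * s) ^ (-(d : ℝ)) : ℝ) * (z * Complex.exp (-gaussExponent s p)) := by
  rw [gaussDensity, gaussExponent, ENNReal.toReal_ofReal (by positivity), Complex.real_smul]
  push_cast
  ring

lemma hasTemperateGrowth_gaussExponent (d : ℕ) (s : ℝ) :
    (gaussExponent s : PhaseSpace d → ℂ).HasTemperateGrowth := by
  have := hasTemperateGrowth_euclideanSq (d := d)
  unfold gaussExponent
  simp only [div_eq_mul_inv]
  exact hasTemperateGrowth_ofReal (by fun_prop)

lemma mul_sq_norm_le_re_gaussExponent (hs : 0 ≤ s) (p : PhaseSpace d) :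
    (2 * s)⁻¹ * ‖p‖ ^ 2 ≤ (gaussExponent s p).re := by
  rw [gaussExponent, Complex.ofReal_re, div_eq_inv_mul]
  gcongr
  exact sq_norm_le_euclideanSq p

lemma fderiv_gaussExponent_rotField (s : ℝ) (j : Fin d) (p : PhaseSpace d) :
    fderiv ℝ (gaussExponent s) p (rotField j p) = 0 := by
  have invariant := fderiv_rotField_of_equivariant (j := j) (r := 0)
    ((hasTemperateGrowth_gaussExponent d s).1.differentiable (by simp) p)
    (fun θ ↦ by
      simp only [gaussExponent, euclideanSq_planeRotation, zero_mul, Complex.exp_zero, one_mul])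
  rwa [zero_mul] at invariant

lemma integrable_gaussMeasure2d (hs : 0 < s) {g : PhaseSpace d → ℂ} (hg : g.HasTemperateGrowth) :
    Integrable g (gaussMeasure2d d s) := by
  rw [gaussMeasure2d_eq_withDensity, integrable_withDensity_iff_integrable_smul'
    (measurable_ofReal_gaussDensity d s) (.of_forall fun _ ↦ ENNReal.ofReal_lt_top)]
  simp only [toReal_ofReal_gaussDensity_smul hs.le]
  exact (integrable_mul_cexp_neg hg (hasTemperateGrowth_gaussExponent d s).1.continuous
    (by positivity) (mul_sq_norm_le_re_gaussExponent hs.le)).const_mul _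

lemma integral_fderiv_rotField_gaussMeasure2d (hs : 0 < s) (j : Fin d) {f : PhaseSpace d → ℂ}
    (hf : f.HasTemperateGrowth) :
    ∫ p, fderiv ℝ f p (rotField j p) ∂gaussMeasure2d d s = 0 := by
  rw [gaussMeasure2d_eq_withDensity, integral_withDensity_eq_integral_toReal_smul
    (measurable_ofReal_gaussDensity d s) (.of_forall fun _ ↦ ENNReal.ofReal_lt_top)]
  simp only [toReal_ofReal_gaussDensity_smul hs.le, integral_const_mul]
  rw [integral_fderiv_rotField_mul_cexp_neg hf (hasTemperateGrowth_gaussExponent d s)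
    (by positivity) (mul_sq_norm_le_re_gaussExponent hs.le) (fderiv_gaussExponent_rotField s j),
    mul_zero]

lemma integral_fderiv_rotField_mul_gaussMeasure2d (hs : 0 < s) (j : Fin d)
    {f g : PhaseSpace d → ℂ} (hf : f.HasTemperateGrowth) (hg : g.HasTemperateGrowth) :
    ∫ p, fderiv ℝ f p (rotField j p) * g p ∂gaussMeasure2d d s =
      -∫ p, f p * fderiv ℝ g p (rotField j p) ∂gaussMeasure2d d s := by
  have hf' := hasTemperateGrowth_fderiv_rotField hf j
  have hg' := hasTemperateGrowth_fderiv_rotField hg j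
  have leibniz (p : PhaseSpace d) : fderiv ℝ (fun p ↦ f p * g p) p (rotField j p) =
      fderiv ℝ f p (rotField j p) * g p + f p * fderiv ℝ g p (rotField j p) := by
    rw [fderiv_fun_mul (hf.1.differentiable (by simp) p) (hg.1.differentiable (by simp) p)]
    simp [mul_comm, add_comm]
  have integral_zero := integral_fderiv_rotField_gaussMeasure2d hs j (hf.fun_mul hg)
  simp only [leibniz] at integral_zero
  rw [integral_add (integrable_gaussMeasure2d hs (by fun_prop))
    (integrable_gaussMeasure2d hs (by fun_prop))] at integral_zero
  exact eq_neg_of_add_eq_zero_left integral_zero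

end GaussMeasure

section ObliqueTerms

open PhaseSpace

variable {d : ℕ} {h : ℝ}

/-- The Wigner function of the tensor products `ψ_α` and `ψ_β` of Hermite functions on `ℝ^d`. -/
noncomputable def hermiteWigner (h : ℝ) (α β : Fin d → ℕ) (p : PhaseSpace d) : ℂ :=
  ∏ l, wigner1 h (fun t ↦ (psi h (α l) t : ℂ)) (fun t ↦ (psi h (β l) t : ℂ)) (p.1 l) (p.2 l)

lemma hasTemperateGrowth_hermiteWigner (hh : 0 < h) (α β : Fin d → ℕ) :
    (hermiteWigner h α β).HasTemperateGrowth :=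
  hasTemperateGrowth_prod fun i _ ↦ hasTemperateGrowth_wigner1_psi
    (hasTemperateGrowth_fst_apply i) (hasTemperateGrowth_snd_apply i) hh (α i) (β i)

lemma hermiteWigner_planeRotation (hh : 0 < h) (α β : Fin d → ℕ) (j : Fin d) (θ : ℝ)
    (p : PhaseSpace d) : hermiteWigner h α β (planeRotation j θ p) =
      Complex.exp (Complex.I * (β j - α j) * θ) * hermiteWigner h α β p := by
  rw [hermiteWigner, hermiteWigner, ← Finset.mul_prod_erase _ _ (Finset.mem_univ j),
    ← Finset.mul_prod_erase _ _ (Finset.mem_univ j), ← mul_assoc, ← wigner1_psi_rotation hh]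
  congr 1
  · simp only [planeRotation, Function.update_self]
  · refine Finset.prod_congr rfl fun l hl ↦ ?_
    simp only [planeRotation, Function.update_of_ne (Finset.ne_of_mem_erase hl)]

lemma fderiv_hermiteWigner_rotField (hh : 0 < h) (α β : Fin d → ℕ) (j : Fin d)
    (p : PhaseSpace d) : fderiv ℝ (hermiteWigner h α β) p (rotField j p) =
      Complex.I * (β j - α j) * hermiteWigner h α β p :=
  fderiv_rotField_of_equivariant
    ((hasTemperateGrowth_hermiteWigner hh α β).1.differentiable (by simp) p)
    (hermiteWigner_planeRotation hh α β j · p)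

lemma rotOpD_eq_fderiv_rotField (j : Fin d) (F : PhaseSpace d → ℝ) (p : PhaseSpace d) :
    rotOpD d j F p = fderiv ℝ F p (rotField j p) := by
  rw [fderiv_rotField]
  rfl

lemma hasTemperateGrowth_iterate_rotOpD {F : PhaseSpace d → ℝ} (hF : F.HasTemperateGrowth)
    (j : Fin d) (n : ℕ) : ((rotOpD d j)^[n] F).HasTemperateGrowth := by
  induction n with
  | zero => exact hF
  | succ n ih =>
    rw [Function.iterate_succ_apply']
    exact funext (rotOpD_eq_fderiv_rotField j _) ▸ hasTemperateGrowth_fderiv_rotField ih j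

lemma integral_rotOpD_mul_hermiteWigner (hh : 0 < h) (α β : Fin d → ℕ) (j : Fin d)
    {F : PhaseSpace d → ℝ} (hF : F.HasTemperateGrowth) :
    ∫ p, (rotOpD d j F p : ℂ) * hermiteWigner h α β p ∂gaussMeasure2d d (h / 2) =
      -Complex.I * (β j - α j) *
        ∫ p, (F p : ℂ) * hermiteWigner h α β p ∂gaussMeasure2d d (h / 2) := by
  have skew := integral_fderiv_rotField_mul_gaussMeasure2d (half_pos hh) j
    (hasTemperateGrowth_ofReal hF) (hasTemperateGrowth_hermiteWigner hh α β)
  have fderiv_F (p : PhaseSpace d) :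
      fderiv ℝ (fun p ↦ (F p : ℂ)) p (rotField j p) = rotOpD d j F p := by
    rw [rotOpD_eq_fderiv_rotField]
    exact congrArg (· (rotField j p))
      (Complex.ofRealCLM.hasFDerivAt.comp p (hF.1.differentiable (by simp) p).hasFDerivAt).fderiv
  simp only [fderiv_F, fderiv_hermiteWigner_rotField hh, mul_left_comm _ (Complex.I * _),
    integral_const_mul, ← neg_mul] at skew
  exact skew

lemma integral_iterate_rotOpD_mul_hermiteWigner (hh : 0 < h) (α β : Fin d → ℕ) (j : Fin d)
    {F : PhaseSpace d → ℝ} (hF : F.HasTemperateGrowth) (n : ℕ) :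
    ∫ p, ((rotOpD d j)^[n] F p : ℂ) * hermiteWigner h α β p ∂gaussMeasure2d d (h / 2) =
      (-Complex.I * (β j - α j)) ^ n *
        ∫ p, (F p : ℂ) * hermiteWigner h α β p ∂gaussMeasure2d d (h / 2) := by
  induction n with
  | zero => simp
  | succ n ih =>
    simp only [Function.iterate_succ_apply']
    rw [integral_rotOpD_mul_hermiteWigner hh α β j (hasTemperateGrowth_iterate_rotOpD hF j n), ih,
      pow_succ', mul_assoc (_ * _)]

end ObliqueTerms

/-- Integration by parts for the oblique matrix elements `I_{α,β}(F̈)` with `α ≠ β`. -/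
theorem oblique_terms (h : ℝ) (hh : 0 < h) (d : ℕ) (hd : 1 ≤ d)
    (F : (Fin d → ℝ) × (Fin d → ℝ) → ℝ) (hF : ContDiff ℝ (⊤ : ℕ∞) F)
    (hFgrowth : ∀ k : ℕ, ∃ (C : ℝ) (m : ℕ), ∀ p : (Fin d → ℝ) × (Fin d → ℝ),
      ‖iteratedFDeriv ℝ k F p‖ ≤ C * (1 + ‖p‖) ^ m)
    (α β : Fin d → ℕ) (hαβ : α ≠ β) :
    (∀ j : Fin d, α j ≠ β j → ∀ n : ℕ, 1 ≤ n →
      (∫ p : (Fin d → ℝ) × (Fin d → ℝ), (F p : ℂ) *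
          ∏ l, wigner1 h (fun t => (psi h (α l) t : ℂ)) (fun t => (psi h (β l) t : ℂ))
            (p.1 l) (p.2 l) ∂ gaussMeasure2d d (h / 2)) =
        (Complex.I ^ n / ((((β j : ℝ) - (α j : ℝ)) : ℝ) : ℂ) ^ n) *
          ∫ p : (Fin d → ℝ) × (Fin d → ℝ), (((rotOpD d j)^[n] F) p : ℂ) *
            ∏ l, wigner1 h (fun t => (psi h (α l) t : ℂ)) (fun t => (psi h (β l) t : ℂ))
              (p.1 l) (p.2 l) ∂ gaussMeasure2d d (h / 2)) ∧
    ((∀ (j : Fin d) (p : (Fin d → ℝ) × (Fin d → ℝ)), rotOpD d j F p = 0) →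
      (∫ p : (Fin d → ℝ) × (Fin d → ℝ), (F p : ℂ) *
          ∏ l, wigner1 h (fun t => (psi h (α l) t : ℂ)) (fun t => (psi h (β l) t : ℂ))
            (p.1 l) (p.2 l) ∂ gaussMeasure2d d (h / 2)) = 0) := by
  have hT : F.HasTemperateGrowth := ⟨hF, fun n ↦
    let ⟨C, m, hC⟩ := hFgrowth n
    ⟨m, C, hC⟩⟩
  have iterate := integral_iterate_rotOpD_mul_hermiteWigner hh α β (hF := hT)
  have c_ne_zero {j : Fin d} (hj : α j ≠ β j) : (β j - α j : ℂ) ≠ 0 :=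
    sub_ne_zero.2 (by exact_mod_cast hj.symm)
  refine ⟨fun j hj n _ ↦ ?_, fun hrot ↦ ?_⟩
  · have factor_cancel :
        Complex.I ^ n / (β j - α j : ℂ) ^ n * (-Complex.I * (β j - α j)) ^ n = 1 := by
      rw [← div_pow, ← mul_pow, div_mul_eq_mul_div, ← mul_assoc, mul_neg, Complex.I_mul_I,
        neg_neg, one_mul, div_self (c_ne_zero hj), one_pow]
    push_cast
    exact .symm <| (congrArg _ (iterate j n)).trans <| by
      rw [← mul_assoc, factor_cancel, one_mul]
      rfl
  · obtain ⟨j, hj⟩ := Function.ne_iff.1 hαβ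
    have vanishing := iterate j 1
    simp only [Function.iterate_one, hrot, Complex.ofReal_zero, zero_mul, integral_zero, pow_one,
      zero_eq_mul] at vanishing
    exact vanishing.resolve_left (mul_ne_zero (neg_ne_zero.2 Complex.I_ne_zero) (c_ne_zero hj))
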